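/- Let ℤ_{≥0}^∞ denote the additive monoid of finitely supported functions ℕ → ℕ (the monoid of monomials in countably many variables x₁, x₂, ...). Then the set LWO(ℤ_{≥0}^∞) of translation-invariant linear well-orders on ℤ_{≥0}^∞ is not a closed subset of LO(ℤ_{≥0}^∞). -/

import Mathlib

/-!
A strict total order `s` on the set `ℕ` of variables
gives the left order `Finsupp.Lex s (· < ·)`, comparing exponents at the `s`-first place where two
monomials differ. If `s` has no infinite strictly increasing sequence, this is a well-order
(`Finsupp.Lex.wellFounded'`).

The ordinary lexicographic order (`s` the usual order, so `x₀ > x₁ > x₂ > ⋯`) is not a well-order.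
It is the limit of the orders obtained from the index orders
`0, 1, …, n - 1, …, n + 2, n + 1, n`, which are well-orders: two monomials that first differ at
place `i` are compared in the same way by all of these orders with `n > i`.
-/

/-- A left order on an additive semigroup: a strict linear (total) order `r`
such that `r a b` implies `r (c + a) (c + b)` for all `c`. -/
def IsLeftAddOrder {G : Type*} [Add G] (r : G → G → Prop) : Prop :=
  IsStrictTotalOrder G r ∧ ∀ a b c : G, r a b → r (c + a) (c + b)

/-- The set `LO(G)` of left orders on `G`. -/
def LeftAddOrder (G : Type*) [Add G] : Type _ :=
  {r : G → G → Prop // IsLeftAddOrder r}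

/-- `U_{a,b}` is the set of left orders `<` with `a < b`. -/
def UU {G : Type*} [Add G] (a b : G) : Set (LeftAddOrder G) := {r | r.1 a b}

/-- `LO(G)` carries the smallest topology in which every `U_{a,b}` is open. -/
instance {G : Type*} [Add G] : TopologicalSpace (LeftAddOrder G) :=
  TopologicalSpace.generateFrom {s | ∃ a b : G, s = UU a b}

/-- `LWO(ℤ_{≥0}^∞)`: the translation-invariant linear orders on the additive
monoid `ℤ_{≥0}^∞ = (ℕ →₀ ℕ)` of finitely supported functions `ℕ → ℕ` that are
well-orders (every nonempty subset has a least element). -/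
def LWOSet : Set (LeftAddOrder (ℕ →₀ ℕ)) :=
  {r | ∀ s : Set (ℕ →₀ ℕ), s.Nonempty → ∃ m ∈ s, ∀ x ∈ s, m = x ∨ r.1 m x}

theorem isStrictTotalOrder_lex (ι : Type*) [LinearOrder ι] :
    IsStrictTotalOrder (ι →₀ ℕ) (Finsupp.Lex (· < ·) (· < ·)) :=
  inferInstanceAs (IsStrictTotalOrder (Lex (ι →₀ ℕ)) (· < ·))

theorem isLeftAddOrder_lex (s : ℕ → ℕ → Prop) [IsStrictTotalOrder ℕ s] :
    IsLeftAddOrder (Finsupp.Lex s (· < ·) : (ℕ →₀ ℕ) → (ℕ →₀ ℕ) → Prop) := by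
  classical
  constructor
  -- The order `s` is given to the indices only: the exponents keep the usual order of `ℕ`.
  · exact @isStrictTotalOrder_lex ℕ (linearOrderOfSTO s)
  · rintro a b c ⟨i, hi, h⟩
    exact ⟨i, fun j hj => by simp [hi j hj], by simpa using h⟩

/-- The left order on monomials that compares exponents at the first place, in the index order `s`,
where two monomials differ. -/
def lexOrder (s : ℕ → ℕ → Prop) [IsStrictTotalOrder ℕ s] : LeftAddOrder (ℕ →₀ ℕ) :=
  ⟨Finsupp.Lex s (· < ·), isLeftAddOrder_lex s⟩

/-- The index order `0, 1, …, n - 1, …, n + 2, n + 1, n`. -/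
def indexOrder (n i j : ℕ) : Prop := (i < n ∧ i < j) ∨ (n ≤ j ∧ j < i)

instance (n : ℕ) : IsStrictTotalOrder ℕ (indexOrder n) where
  irrefl i := by unfold indexOrder; omega
  trans i j k := by unfold indexOrder; omega
  trichotomous i j := by unfold indexOrder; omega

theorem wellFounded_swap_indexOrder (n : ℕ) : WellFounded (Function.swap (indexOrder n)) := by
  -- Going backwards, the places from `n` on ascend, and are followed by `n - 1, …, 1, 0`.
  have h : Subrelation (Function.swap (indexOrder n))
      (InvImage (Prod.Lex (· < ·) (· < ·))
        (fun i : ℕ => ((if i < n then 1 else 0 : ℕ), (if i < n then n - i else i : ℕ)))) := by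
    intro i j hij
    simp only [Function.swap, indexOrder] at hij
    simp only [InvImage, Prod.lex_def]
    split_ifs <;> omega
  exact h.wf (InvImage.wf _ (WellFounded.prod_lex wellFounded_lt wellFounded_lt))

theorem lexOrder_indexOrder_mem (n : ℕ) : lexOrder (indexOrder n) ∈ LWOSet := by
  have hwf : WellFounded (lexOrder (indexOrder n)).1 :=
    Finsupp.Lex.wellFounded' (fun _ => Nat.not_lt_zero _) wellFounded_lt
      (wellFounded_swap_indexOrder n)
  have := (lexOrder (indexOrder n)).2.1
  intro t ht
  obtain ⟨m, hm, hmin⟩ := hwf.has_min t ht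
  refine ⟨m, hm, fun x hx => ?_⟩
  rcases trichotomous_of (lexOrder (indexOrder n)).1 m x with h | h | h
  · exact Or.inr h
  · exact Or.inl h
  · exact absurd h (hmin x hx)

theorem tendsto_lexOrder_indexOrder :
    Filter.Tendsto (fun n => lexOrder (indexOrder n)) Filter.atTop
      (nhds (lexOrder (· < ·))) := by
  rw [TopologicalSpace.tendsto_nhds_generateFrom_iff]
  rintro _ ⟨a, b, rfl⟩ ⟨i, hi, h⟩
  filter_upwards [Filter.eventually_gt_atTop i] with n hn
  refine ⟨i, fun j hj => hi j ?_, h⟩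
  unfold indexOrder at hj
  change j < i
  omega

/-- The variables `x₀ > x₁ > ⋯` form a nonempty set without a least element. -/
theorem lexOrder_lt_notMem : lexOrder (· < ·) ∉ LWOSet := by
  intro h
  obtain ⟨_, ⟨i, rfl⟩, hi⟩ := h (Set.range fun i => Finsupp.single i 1) (Set.range_nonempty _)
  have := (lexOrder (· < ·)).2.1
  have hlt : (lexOrder (· < ·)).1 (Finsupp.single (i + 1) 1) (Finsupp.single i 1) := by
    refine ⟨i, fun j hj => ?_, by simp⟩
    change j < i at hj
    rw [Finsupp.single_eq_of_ne (by omega), Finsupp.single_eq_of_ne (by omega)]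
  rcases hi _ ⟨i + 1, rfl⟩ with h | h
  · have := Finsupp.single_left_injective one_ne_zero h
    omega
  · exact asymm_of (lexOrder (· < ·)).1 hlt h

/-- `LWO(ℤ_{≥0}^∞)` is not a closed subset of `LO(ℤ_{≥0}^∞)`. -/
theorem stmt19 : ¬ IsClosed LWOSet := by
  intro h
  exact lexOrder_lt_notMem <| h.mem_of_tendsto tendsto_lexOrder_indexOrder
    (Filter.Eventually.of_forall lexOrder_indexOrder_mem)
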